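/- arXiv:1608.03499 — 2 statements merged into one kernel-verified Lean document; each statement's English description precedes it below -/
import Mathlib

section
/- Let k[ℤ^P] denote the Laurent polynomial ring (the group algebra over k of the free abelian group ℤ^P) and let J_n·k[ℤ^P] be the extension of J_n to k[ℤ^P]. Then the quotient k[ℤ^P]/J_n·k[ℤ^P] is isomorphic as a k-algebra to the group algebra k[ℤ^n ⊕ (ℤ/2ℤ)^{c_{n−1}}]. -/
open scoped BigOperators

namespace Veronese

open MvPolynomial

/-- `c m = C(m,2)`. -/
def c (m : ℕ) : ℕ := m.choose 2

variable (n : ℕ)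

/-- multiplicity (as ℤ) of the index `i` in the unordered pair `s`. -/
def wt (s : Sym2 (Fin n)) : Fin n → ℤ :=
  Sym2.lift ⟨fun a b i => (if i = a then 1 else 0) + (if i = b then 1 else 0),
    fun a b => funext fun i => add_comm _ _⟩ s

/-- The Veronese grading map `V_n : ℤ^P → ℤ^n`, sending `e_{ij} ↦ e_i + e_j`. -/
def Vmap : (Sym2 (Fin n) → ℤ) →ₗ[ℤ] (Fin n → ℤ) where
  toFun u := fun i => ∑ s : Sym2 (Fin n), u s * wt n s i
  map_add' u v := funext fun i => by
    simp [add_mul, Finset.sum_add_distrib]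
  map_smul' m u := funext fun i => by
    simp [Finset.mul_sum, smul_eq_mul, mul_assoc]

/-- The Veronese lattice `L_n = ker V_n`. -/
def Llat : Submodule ℤ (Sym2 (Fin n) → ℤ) := LinearMap.ker (Vmap n)

/-- standard basis vector `e_{ij}` of `ℤ^P`. -/
def e (i j : Fin n) : Sym2 (Fin n) → ℤ := Pi.single s(i, j) 1

lemma e_comm (i j : Fin n) : e n i j = e n j i := by
  unfold e; rw [Sym2.eq_swap]

/-- `[ij|ij] = e_{ii} + e_{jj} - 2 e_{ij}`. -/
def minorVec (i j : Fin n) : Sym2 (Fin n) → ℤ := e n i i + e n j j - 2 • e n i j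

/-- The principal minor lattice `L'_n`. -/
def L'lat : Submodule ℤ (Sym2 (Fin n) → ℤ) :=
  Submodule.span ℤ {v | ∃ i j : Fin n, i < j ∧ v = minorVec n i j}

/-- the last index `n` (zero-based: `n-1`) of `Fin n`. -/
def lastIdx (hn : 0 < n) : Fin n := ⟨n - 1, Nat.sub_lt hn one_pos⟩

/-- embedding `[n-1] → [n]`. -/
def ι : Fin (n - 1) → Fin n := Fin.castLE (Nat.sub_le n 1)

/-- `[in|jn] = e_{ij} + e_{nn} - e_{in} - e_{jn}` for `i,j ∈ [n-1]`. -/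
def Bvec (hn : 0 < n) : Sym2 (Fin (n - 1)) → (Sym2 (Fin n) → ℤ) :=
  Sym2.lift ⟨fun i j =>
      e n (ι n i) (ι n j) + e n (lastIdx n hn) (lastIdx n hn)
        - e n (ι n i) (lastIdx n hn) - e n (ι n j) (lastIdx n hn),
    fun i j => by dsimp only; rw [e_comm n (ι n i) (ι n j)]; ring⟩

/-- The family `B'`: `[in|in]` on the diagonal, `2[in|jn]` off it. -/
noncomputable def B'vec (hn : 0 < n) (s : Sym2 (Fin (n - 1))) : Sym2 (Fin n) → ℤ :=
  if s.IsDiag then Bvec n hn s else 2 • Bvec n hn s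

/-- multiplicity (as ℕ) of the index `i` in the unordered pair `s`. -/
def wtN (s : Sym2 (Fin n)) : Fin n → ℕ :=
  Sym2.lift ⟨fun a b i => (if i = a then 1 else 0) + (if i = b then 1 else 0),
    fun a b => funext fun i => add_comm _ _⟩ s

/-- The Veronese degree of an exponent vector `u ∈ ℕ^P`. -/
def VN (u : Sym2 (Fin n) →₀ ℕ) : Fin n → ℕ := fun i => ∑ s : Sym2 (Fin n), u s * wtN n s i

/-- The fiber `V_n^{-1}[b] = {u ∈ ℕ^P : V_n u = b}`. -/
def fiber (b : Fin n → ℕ) : Set (Sym2 (Fin n) →₀ ℕ) := {u | VN n u = b}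

/-- natural inclusion `ℕ^P → ℤ^P`. -/
def toZ (u : Sym2 (Fin n) →₀ ℕ) : Sym2 (Fin n) → ℤ := fun s => (u s : ℤ)

lemma fiber_finite (b : Fin n → ℕ) : (fiber n b).Finite := by
  classical
  have hsub : fiber n b ⊆
      ↑(Finset.Iic ((Finsupp.equivFunOnFinite.symm fun _ => ∑ i, b i) : Sym2 (Fin n) →₀ ℕ)) := by
    intro u hu
    simp only [Finset.coe_Iic, Set.mem_Iic, Finsupp.le_def]
    intro s
    induction s using Sym2.ind with
    | _ i j =>
      have h1 : u s(i, j) * wtN n s(i, j) i ≤ VN n u i :=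
        Finset.single_le_sum (f := fun s => u s * wtN n s i)
          (fun s _ => Nat.zero_le _) (Finset.mem_univ s(i, j))
      have h2 : 1 ≤ wtN n s(i, j) i := by
        simp only [wtN, Sym2.lift_mk, if_pos rfl]
        exact Nat.le_add_right 1 _
      have h3 : u s(i, j) ≤ b i := by
        have hb : VN n u i = b i := congrFun hu i
        calc u s(i, j) ≤ u s(i, j) * wtN n s(i, j) i := Nat.le_mul_of_pos_right _ h2
          _ ≤ VN n u i := h1
          _ = b i := hb
      calc u s(i, j) ≤ b i := h3
        _ ≤ ∑ i, b i := Finset.single_le_sum (fun _ _ => Nat.zero_le _) (Finset.mem_univ _)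
        _ = (Finsupp.equivFunOnFinite.symm fun _ => ∑ i, b i) s(i, j) := by
            simp
  exact Set.Finite.subset (Finset.finite_toSet _) hsub

variable (k : Type*) [Field k]

/-- the polynomial ring `k[x_{ij}]`. -/
abbrev R := MvPolynomial (Sym2 (Fin n)) k

/-- The principal minor ideal `J_n`. -/
noncomputable def Jideal : Ideal (R n k) :=
  Ideal.span {f | ∃ i j : Fin n, i < j ∧ f = X s(i, i) * X s(j, j) - X s(i, j) ^ 2}

/-- The map `x_{ij} ↦ t_i t_j`. -/
noncomputable def veroHom : R n k →ₐ[k] MvPolynomial (Fin n) k :=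
  aeval fun s => Sym2.lift ⟨fun a b => X a * X b, fun a b => mul_comm _ _⟩ s

/-- The second Veronese ideal `I_n`. -/
noncomputable def Iideal : Ideal (R n k) := RingHom.ker (veroHom n k)

/-- A ℤ₂-twisting: an automorphism sending each variable to ± itself. -/
def IsTwisting (φ : R n k ≃ₐ[k] R n k) : Prop :=
  ∀ s : Sym2 (Fin n), φ (X s) = X s ∨ φ (X s) = - X s

/-- `f` is V_n-homogeneous of degree `b`. -/
def VHomog (f : R n k) (b : Fin n → ℕ) : Prop := ∀ u ∈ f.support, VN n u = b

/-- The fiber over `b` as a finite set. -/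
noncomputable def fiberFinset (b : Fin n → ℕ) : Finset (Sym2 (Fin n) →₀ ℕ) :=
  (fiber_finite n b).toFinset

/-- generating function of the canonical (0/1 off-diagonal) representatives of
the fiber over `b`. -/
noncomputable def pplusAt (b : Fin n → ℕ) : R n k :=
  ∑ u ∈ (fiberFinset n b).filter (fun u => ∀ s : Sym2 (Fin n), ¬s.IsDiag → u s ≤ 1),
    monomial u (1 : k)

/-- `p⁺_{n,j}` (for `n` odd): fiber over `(n-2,…,n-2) + e_j`. -/
noncomputable def pplusOdd (j : Fin n) : R n k :=
  pplusAt n k fun i => (n - 2) + if i = j then 1 else 0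

/-- `p⁺_n` (for `n` even): fiber over `(n-2,…,n-2)`. -/
noncomputable def pplusEven : R n k :=
  pplusAt n k fun _ => n - 2

/-- `p_n = ∏_{i<j∈[n-1]} (x_{ij} x_{nn} + x_{in} x_{jn})`. -/
noncomputable def pn (hn : 0 < n) : R n k :=
  ∏ p ∈ Finset.univ.filter (fun p : Fin (n - 1) × Fin (n - 1) => p.1 < p.2),
    (X s(ι n p.1, ι n p.2) * X s(lastIdx n hn, lastIdx n hn)
      + X s(ι n p.1, lastIdx n hn) * X s(ι n p.2, lastIdx n hn))


/-- the Laurent polynomial ring `k[ℤ^P]`, i.e. the group algebra of `ℤ^P` over `k`. -/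
abbrev Laurent := AddMonoidAlgebra k (Sym2 (Fin n) → ℤ)

/-- the natural inclusion `k[ℕ^P] → k[ℤ^P]`, `x_{ij} ↦ x^{e_{ij}}`. -/
noncomputable def toLaurent : R n k →ₐ[k] Laurent n k :=
  aeval fun s => AddMonoidAlgebra.single (Pi.single s 1 : Sym2 (Fin n) → ℤ) (1 : k)

/-!
Modulo `J_n` the monomials of `k[ℤ^P]` are identified along the lattice spanned by the vectors
`e_ii + e_jj - 2 e_ij`, so the quotient is the group algebra of `ℤ^P` modulo this lattice.
Fix an index `o` and put `[io|jo] = e_ij + e_oo - e_io - e_jo`. Then `ℤ^P` is freely generated by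
the `e_io` together with the `[io|jo]` for `i, j ≠ o`, and in these coordinates the lattice is
generated by the `[io|io]` and by twice the `[io|jo]` with `i ≠ j`.
-/

section LatticeIdeal

open AddMonoidAlgebra

variable {S A B : Type*} [CommRing S] [AddCommGroup A] [AddMonoid B]

theorem isUnit_single_one (a : A) : IsUnit (single a 1 : S[A]) :=
  (Group.isUnit (Multiplicative.ofAdd a)).map (of S A)

/-- The lattice `{a | x^a ≡ 1 mod I}` of an ideal `I` of the group algebra `S[A]`. Its being a
subgroup reduces memberships in `I` to generators of lattices. -/
def exponentLattice (I : Ideal S[A]) : AddSubgroup A where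
  carrier := {a | single a 1 - 1 ∈ I}
  zero_mem' := by simp [AddMonoidAlgebra.one_def]
  add_mem' {a b} ha hb := by
    have h : (single (a + b) 1 - 1 : S[A]) =
        single a 1 * (single b 1 - 1) + (single a 1 - 1) := by
      simp [mul_sub, single_mul_single]
    change single (a + b) 1 - 1 ∈ I
    exact h ▸ I.add_mem (I.mul_mem_left _ hb) ha
  neg_mem' {a} ha := by
    have h : (single (-a) 1 - 1 : S[A]) = -(single (-a) 1 * (single a 1 - 1)) := by
      simp [mul_sub, single_mul_single, AddMonoidAlgebra.one_def]
    change single (-a) 1 - 1 ∈ I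
    exact h ▸ I.neg_mem (I.mul_mem_left _ ha)

theorem sub_mem_exponentLattice {I : Ideal S[A]} {a b : A} :
    a - b ∈ exponentLattice I ↔ single a 1 - single b 1 ∈ I := by
  have h : (single a 1 - single b 1 : S[A]) = single b 1 * (single (a - b) 1 - 1) := by
    simp [mul_sub, single_mul_single]
  rw [h, I.unit_mul_mem_iff_mem (isUnit_single_one b)]
  rfl

variable (S) in
/-- The lattice ideal `⟨x^a - 1 : a ∈ L⟩` of a subgroup `L` of `A`. -/
noncomputable def latticeIdeal (L : AddSubgroup A) : Ideal S[A] :=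
  Ideal.span ((fun a => single a 1 - 1) '' L)

theorem latticeIdeal_le_iff {L : AddSubgroup A} {I : Ideal S[A]} :
    latticeIdeal S L ≤ I ↔ L ≤ exponentLattice I := by
  rw [latticeIdeal, Ideal.span_le, Set.image_subset_iff]
  rfl

theorem single_sub_single_mem_latticeIdeal {f : A →+ B} {a b : A} (h : f a = f b) (r : S) :
    single a r - single b r ∈ latticeIdeal S f.ker := by
  have hab : a - b ∈ f.ker := f.sub_mem_ker_iff.2 h
  have hmem : single a 1 - single b 1 ∈ latticeIdeal S f.ker :=
    sub_mem_exponentLattice.1 (latticeIdeal_le_iff.1 le_rfl hab)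
  simpa [smul_sub] using Submodule.smul_of_tower_mem _ r hmem

theorem ker_mapDomainAlgHom (f : A →+ B) :
    RingHom.ker (mapDomainAlgHom S S f) = latticeIdeal S f.ker := by
  refine le_antisymm (fun x hx => ?_) (latticeIdeal_le_iff.2 fun a ha => ?_)
  · let σ : B → A := Function.invFun f
    have sub_section_mem (y : S[A]) : y - mapDomain σ (mapDomain f y) ∈ latticeIdeal S f.ker := by
      induction y using AddMonoidAlgebra.induction_linear with
      | zero => simp
      | add y z hy hz =>
        simpa only [mapDomain_add, add_sub_add_comm] using Ideal.add_mem _ hy hz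
      | single a r =>
        simpa only [mapDomain_single] using
          single_sub_single_mem_latticeIdeal (Function.invFun_eq ⟨a, rfl⟩).symm r
    have hx' : mapDomain f x = 0 := hx
    simpa only [hx', mapDomain_zero, sub_zero] using sub_section_mem x
  · rw [← sub_zero a, sub_mem_exponentLattice]
    have hfa : f a = 0 := ha
    simp only [RingHom.mem_ker, map_sub, mapDomainAlgHom_apply, mapDomain_single, hfa, map_zero,
      sub_self]

theorem mapDomainAlgHom_surjective {f : A →+ B} (hf : Function.Surjective f) :
    Function.Surjective (mapDomainAlgHom S S f) := fun y => by
  obtain ⟨x, hx⟩ := Finsupp.mapDomain_surjective hf y.coeff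
  exact ⟨ofCoeff x, congrArg ofCoeff hx⟩

/-- A surjection `A → B` identifies `S[B]` with the quotient of `S[A]` by the lattice ideal of the
kernel. -/
noncomputable def quotientLatticeIdealEquiv (f : A →+ B) (hf : Function.Surjective f) :
    (S[A] ⧸ latticeIdeal S f.ker) ≃ₐ[S] S[B] :=
  (Ideal.quotientEquivAlgOfEq S (ker_mapDomainAlgHom f).symm).trans <|
    Ideal.quotientKerAlgEquivOfSurjective (mapDomainAlgHom_surjective hf)

end LatticeIdeal

section OffPair

variable {α : Type*} {o : α}

/-- The unordered pairs of distinct indices other than `o`. -/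
abbrev OffPair (o : α) := {t : Sym2 {i : α // i ≠ o} // ¬t.IsDiag}

theorem card_offPair [Fintype α] [DecidableEq α] (o : α) :
    Fintype.card (OffPair o) = (Fintype.card α - 1).choose 2 := by
  rw [Sym2.card_subtype_not_diag]
  simp

/-- The unordered pair in `α` underlying an element of `OffPair o`. -/
def OffPair.toSym2 (t : OffPair o) : Sym2 α := t.1.map Subtype.val

theorem OffPair.toSym2_injective : Function.Injective (toSym2 (o := o)) :=
  (Sym2.map.injective Subtype.val_injective).comp Subtype.val_injective

theorem OffPair.not_isDiag_toSym2 (t : OffPair o) : ¬t.toSym2.IsDiag := by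
  rw [toSym2, Sym2.isDiag_map Subtype.val_injective]
  exact t.2

theorem OffPair.notMem_toSym2 (t : OffPair o) : o ∉ t.toSym2 := by
  simp [toSym2]

theorem OffPair.exists_toSym2_eq {s : Sym2 α} (hd : ¬s.IsDiag) (ho : o ∉ s) :
    ∃ t : OffPair o, t.toSym2 = s := by
  have hne : ∀ i ∈ s, i ≠ o := fun i hi h => ho (h ▸ hi)
  have hs : (s.attachWith hne).map Subtype.val = s := Sym2.attachWith_map_subtypeVal hne
  refine ⟨⟨s.attachWith hne, fun h => hd ?_⟩, hs⟩
  exact hs ▸ h.map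

end OffPair

section PrincipalMinorLattice

variable {α : Type*} [DecidableEq α]

/-- The exponent vector `e_ii + e_jj - 2 e_ij` of a principal `2`-minor. -/
def principalMinorVec (i j : α) : Sym2 α → ℤ :=
  Pi.single s(i, i) 1 + Pi.single s(j, j) 1 - 2 • Pi.single s(i, j) 1

variable (α) in
/-- The lattice spanned by the exponent vectors of the principal `2`-minors. -/
def principalMinorLattice : AddSubgroup (Sym2 α → ℤ) :=
  AddSubgroup.closure {u | ∃ i j, u = principalMinorVec i j}

theorem principalMinorVec_mem (i j : α) : principalMinorVec i j ∈ principalMinorLattice α :=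
  AddSubgroup.subset_closure ⟨i, j, rfl⟩

/-- The vector `[io|jo] = e_ij + e_oo - e_io - e_jo` attached to the pair `s(i, j)`. -/
def bracket (o : α) : Sym2 α → Sym2 α → ℤ :=
  Sym2.lift ⟨fun i j => Pi.single s(i, j) 1 + Pi.single s(o, o) 1
      - (Pi.single s(i, o) 1 + Pi.single s(j, o) 1),
    fun i j => by dsimp only; rw [Sym2.eq_swap, add_comm (Pi.single s(i, o) 1)]⟩

theorem bracket_mk (o i j : α) : bracket o s(i, j) =
    Pi.single s(i, j) 1 + Pi.single s(o, o) 1 - (Pi.single s(i, o) 1 + Pi.single s(j, o) 1) :=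
  rfl

theorem bracket_eq_zero_of_mem {o : α} {s : Sym2 α} (hs : o ∈ s) : bracket o s = 0 := by
  obtain ⟨i, rfl⟩ := hs
  rw [Sym2.eq_swap, bracket_mk]
  abel

theorem bracket_mem_of_isDiag (o : α) {s : Sym2 α} (hs : s.IsDiag) :
    bracket o s ∈ principalMinorLattice α := by
  induction s with
  | _ i j =>
    obtain rfl : i = j := hs
    have h : bracket o s(i, i) = principalMinorVec i o := by
      rw [bracket_mk, principalMinorVec]
      abel
    exact h ▸ principalMinorVec_mem i o

theorem two_zsmul_bracket_mem (o : α) (s : Sym2 α) :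
    (2 : ℤ) • bracket o s ∈ principalMinorLattice α := by
  induction s with
  | _ i j =>
    have h : (2 : ℤ) • bracket o s(i, j) =
        principalMinorVec i o + principalMinorVec j o - principalMinorVec i j := by
      simp only [bracket_mk, principalMinorVec]
      abel
    rw [h]
    exact sub_mem (add_mem (principalMinorVec_mem i o) (principalMinorVec_mem j o))
      (principalMinorVec_mem i j)

end PrincipalMinorLattice

section Parity

variable {α : Type*}

/-- The exponents mod `2` at the off-diagonal pairs avoiding `o`. -/
def offParity (o : α) : (Sym2 α → ℤ) →+ (OffPair o → ZMod 2) where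
  toFun u t := u t.toSym2
  map_zero' := by ext; simp
  map_add' u v := by ext; simp

theorem offParity_apply (o : α) (u : Sym2 α → ℤ) (t : OffPair o) :
    offParity o u t = u t.toSym2 :=
  rfl

variable [DecidableEq α]

theorem offParity_single_of_isDiag (o : α) {s : Sym2 α} (hs : s.IsDiag) :
    offParity o (Pi.single s 1) = 0 := by
  ext t
  have hne : t.toSym2 ≠ s := fun h => t.not_isDiag_toSym2 (h ▸ hs)
  simp [offParity_apply, hne]

theorem offParity_single_of_mem {o : α} {s : Sym2 α} (hs : o ∈ s) :
    offParity o (Pi.single s 1) = 0 := by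
  ext t
  have hne : t.toSym2 ≠ s := fun h => t.notMem_toSym2 (h ▸ hs)
  simp [offParity_apply, hne]

theorem offParity_single_toSym2 {o : α} (t : OffPair o) :
    offParity o (Pi.single t.toSym2 1) = Pi.single t 1 := by
  ext t'
  simp [offParity_apply, Pi.single_apply, OffPair.toSym2_injective.eq_iff]

theorem offParity_principalMinorVec (o i j : α) : offParity o (principalMinorVec i j) = 0 := by
  have two_nsmul_eq_zero (b : OffPair o → ZMod 2) : 2 • b = 0 :=
    funext fun t => CharTwo.two_nsmul (b t)
  simp only [principalMinorVec, map_add, map_sub, map_nsmul, two_nsmul_eq_zero,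
    offParity_single_of_isDiag, Sym2.mk_isDiag_iff, add_zero, sub_zero]

theorem offParity_bracket (o : α) (s : Sym2 α) :
    offParity o (bracket o s) = offParity o (Pi.single s 1) := by
  induction s with
  | _ i j => simp [bracket_mk, offParity_single_of_mem]

theorem zsmul_bracket_mem {o : α} {u : Sym2 α → ℤ} (hu : offParity o u = 0) (s : Sym2 α) :
    u s • bracket o s ∈ principalMinorLattice α := by
  by_cases hd : s.IsDiag
  · exact zsmul_mem (bracket_mem_of_isDiag o hd) _
  by_cases ho : o ∈ s
  · simp [bracket_eq_zero_of_mem ho]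
  obtain ⟨t, rfl⟩ := OffPair.exists_toSym2_eq hd ho
  obtain ⟨v, hv⟩ := (ZMod.intCast_zmod_eq_zero_iff_dvd (u t.toSym2) 2).1 (congrFun hu t)
  rw [hv, mul_comm, mul_zsmul]
  exact zsmul_mem (two_zsmul_bracket_mem o _) v

end Parity

section Invariants

variable {α : Type*} [DecidableEq α] [Fintype α]

/-- The map `ℤ^P → ℤ^α` with `e_ij ↦ e_i + e_j - e_o`: the Veronese degree, made surjective by the
shift by `e_o`. -/
def shiftedDegree (o : α) : (Sym2 α → ℤ) →ₗ[ℤ] (α → ℤ) :=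
  Fintype.linearCombination ℤ <| Sym2.lift
    ⟨fun i j => Pi.single i 1 + Pi.single j 1 - Pi.single o 1,
      fun i j => by dsimp only; rw [add_comm (Pi.single i 1)]⟩

/-- The section `e_i ↦ e_io` of `shiftedDegree o`. -/
def starSection (o : α) : (α → ℤ) →ₗ[ℤ] (Sym2 α → ℤ) :=
  Fintype.linearCombination ℤ fun i => Pi.single s(i, o) 1

theorem shiftedDegree_single (o i j : α) : shiftedDegree o (Pi.single s(i, j) 1) =
    Pi.single i 1 + Pi.single j 1 - Pi.single o 1 := by
  simp [shiftedDegree]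

theorem starSection_single (o i : α) :
    starSection o (Pi.single i 1) = Pi.single s(i, o) 1 := by
  simp [starSection]

theorem shiftedDegree_starSection (o : α) (a : α → ℤ) :
    shiftedDegree o (starSection o a) = a := by
  suffices h : shiftedDegree o ∘ₗ starSection o = LinearMap.id from LinearMap.congr_fun h a
  ext i : 2
  simp [starSection_single, shiftedDegree_single]

theorem starSection_shiftedDegree_add (o : α) (u : Sym2 α → ℤ) :
    starSection o (shiftedDegree o u) + ∑ s, u s • bracket o s = u := by
  suffices h : starSection o ∘ₗ shiftedDegree o + Fintype.linearCombination ℤ (bracket o) =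
      LinearMap.id from LinearMap.congr_fun h u
  ext s : 2
  induction s with
  | _ i j => simp [starSection_single, shiftedDegree_single, bracket_mk]

theorem shiftedDegree_bracket (o : α) (s : Sym2 α) : shiftedDegree o (bracket o s) = 0 := by
  induction s with
  | _ i j =>
    simp only [bracket_mk, map_sub, map_add, shiftedDegree_single]
    abel

theorem shiftedDegree_principalMinorVec (o i j : α) :
    shiftedDegree o (principalMinorVec i j) = 0 := by
  simp only [principalMinorVec, map_sub, map_add, map_nsmul, shiftedDegree_single]
  abel

theorem offParity_starSection (o : α) (a : α → ℤ) : offParity o (starSection o a) = 0 := by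
  simp only [starSection, Fintype.linearCombination_apply, map_sum, map_zsmul,
    offParity_single_of_mem (Sym2.mem_mk_right _ o), smul_zero, Finset.sum_const_zero]

/-- The homomorphism `ℤ^P → ℤ^α ⊕ (ℤ/2)^T` whose kernel is the principal minor lattice, where `T`
is the set of off-diagonal pairs avoiding `o`. -/
def minorInvariants (o : α) : (Sym2 α → ℤ) →+ (α → ℤ) × (OffPair o → ZMod 2) :=
  (shiftedDegree o).toAddMonoidHom.prod (offParity o)

theorem minorInvariants_surjective (o : α) : Function.Surjective (minorInvariants o) := by
  rintro ⟨a, b⟩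
  refine ⟨starSection o a + ∑ t, (b t).val • bracket o t.toSym2, Prod.ext ?_ ?_⟩
  · change shiftedDegree o _ = a
    simp only [map_add, map_sum, map_nsmul, shiftedDegree_starSection, shiftedDegree_bracket,
      smul_zero, Finset.sum_const_zero, add_zero]
  · change offParity o _ = b
    ext t
    simp only [map_add, map_sum, map_nsmul, offParity_starSection, offParity_bracket,
      offParity_single_toSym2, zero_add]
    simp [Pi.single_apply, -nsmul_eq_mul]

theorem ker_minorInvariants (o : α) : (minorInvariants o).ker = principalMinorLattice α := by
  refine le_antisymm (fun u hu => ?_) ((AddSubgroup.closure_le _).2 ?_)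
  · have hdeg : shiftedDegree o u = 0 := congrArg Prod.fst hu
    have hpar : offParity o u = 0 := congrArg Prod.snd hu
    rw [← starSection_shiftedDegree_add o u, hdeg, map_zero, zero_add]
    exact sum_mem fun s _ => zsmul_bracket_mem hpar s
  · rintro _ ⟨i, j, rfl⟩
    exact Prod.ext (shiftedDegree_principalMinorVec o i j) (offParity_principalMinorVec o i j)

end Invariants

section PrincipalMinorIdeal

open AddMonoidAlgebra

variable {α : Type*} [DecidableEq α] (S : Type*) [CommRing S]

/-- The principal `2`-minor `x_ii x_jj - x_ij ^ 2` as an element of the Laurent polynomial ring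
`S[ℤ^P]`. -/
noncomputable def laurentMinor (i j : α) : S[Sym2 α → ℤ] :=
  single (Pi.single s(i, i) 1 + Pi.single s(j, j) 1) 1 - single (2 • Pi.single s(i, j) 1) 1

theorem laurentMinor_self (i : α) : laurentMinor S i i = 0 := by
  rw [laurentMinor, two_nsmul, sub_self]

theorem laurentMinor_comm (i j : α) : laurentMinor S i j = laurentMinor S j i := by
  rw [laurentMinor, laurentMinor, add_comm, Sym2.eq_swap (a := i) (b := j)]

variable (α) in
/-- The ideal of `S[ℤ^P]` generated by the principal `2`-minors; those with `i = j` vanish. -/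
noncomputable def laurentMinorIdeal : Ideal S[Sym2 α → ℤ] :=
  Ideal.span {f | ∃ i j, f = laurentMinor S i j}

theorem laurentMinorIdeal_eq_latticeIdeal :
    laurentMinorIdeal α S = latticeIdeal S (principalMinorLattice α) := by
  refine le_antisymm (Ideal.span_le.2 ?_)
    (latticeIdeal_le_iff.2 ((AddSubgroup.closure_le _).2 ?_)) <;> rintro _ ⟨i, j, rfl⟩
  · exact sub_mem_exponentLattice.1 (latticeIdeal_le_iff.1 le_rfl (principalMinorVec_mem i j))
  · exact sub_mem_exponentLattice.2 (Ideal.subset_span ⟨i, j, rfl⟩)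

theorem toLaurent_minor (n : ℕ) (k : Type*) [Field k] (i j : Fin n) :
    toLaurent n k (X s(i, i) * X s(j, j) - X s(i, j) ^ 2) = laurentMinor k i j := by
  simp [toLaurent, laurentMinor, single_mul_single, single_pow]

theorem map_toLaurent_Jideal (n : ℕ) (k : Type*) [Field k] :
    Ideal.map (toLaurent n k) (Jideal n k) = laurentMinorIdeal (Fin n) k := by
  rw [Jideal, Ideal.map_span]
  refine le_antisymm (Ideal.span_mono ?_) (Ideal.span_le.2 ?_)
  · rintro _ ⟨_, ⟨i, j, -, rfl⟩, rfl⟩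
    exact ⟨i, j, toLaurent_minor n k i j⟩
  · rintro _ ⟨i, j, rfl⟩
    wlog hij : i ≤ j generalizing i j
    · exact laurentMinor_comm k i j ▸ this j i (le_of_not_ge hij)
    rcases hij.eq_or_lt with rfl | hlt
    · simp [laurentMinor_self]
    · exact Ideal.subset_span ⟨_, ⟨i, j, hlt, rfl⟩, toLaurent_minor n k i j⟩

end PrincipalMinorIdeal

theorem laurent_quotient_iso_general (α : Type*) [Fintype α] [DecidableEq α] [Nonempty α]
    (S : Type*) [CommRing S] :
    Nonempty ((AddMonoidAlgebra S (Sym2 α → ℤ) ⧸ laurentMinorIdeal α S) ≃ₐ[S]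
      AddMonoidAlgebra S ((α → ℤ) × (Fin ((Fintype.card α - 1).choose 2) → ZMod 2))) := by
  obtain ⟨o⟩ := ‹Nonempty α›
  have hI : laurentMinorIdeal α S = latticeIdeal S (minorInvariants o).ker := by
    rw [laurentMinorIdeal_eq_latticeIdeal, ker_minorInvariants]
  have reindex : OffPair o ≃ Fin ((Fintype.card α - 1).choose 2) :=
    Fintype.equivFinOfCardEq (card_offPair o)
  exact ⟨(Ideal.quotientEquivAlgOfEq S hI).trans <|
    (quotientLatticeIdealEquiv (minorInvariants o) (minorInvariants_surjective o)).trans <|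
      AddMonoidAlgebra.domCongr S S <|
        (AddEquiv.refl _).prodCongr (AddEquiv.arrowCongr reindex (AddEquiv.refl _))⟩

/-- `k[ℤ^P] / J_n k[ℤ^P] ≅ k[ℤ^n ⊕ (ℤ/2ℤ)^{c_{n-1}}]` as `k`-algebras. -/
theorem laurent_quotient_iso (n : ℕ) (hn : 2 ≤ n) (k : Type*) [Field k] :
    Nonempty ((Laurent n k ⧸ Ideal.map (toLaurent n k) (Jideal n k)) ≃ₐ[k]
      AddMonoidAlgebra k ((Fin n → ℤ) × (Fin (c (n - 1)) → ZMod 2))) := by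
  have : Nonempty (Fin n) := ⟨⟨0, by omega⟩⟩
  have h := laurent_quotient_iso_general (Fin n) k
  rwa [Fintype.card_fin, ← map_toLaurent_Jideal] at h

end Veronese
end

section
/- Let n ≥ 3 be odd and char k ≠ 2, and let φ_1, …, φ_N (N = 2^{c_{n−1}}) be ℤ₂-twistings such that the φ_i(I_n) are pairwise distinct and J_n = ∩_{i=1}^N φ_i(I_n). Then for every l ∈ {1,…,N}: ∩_{i ≠ l} φ_i(I_n) = J_n + ⟨ φ_l(p^+_{n,1}), …, φ_l(p^+_{n,n}) ⟩. Moreover each p^+_{n,j} is V_n-homogeneous of V_n-degree (n−2,…,n−2) + e_j and of total degree (n−1)²/2. -/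
open scoped BigOperators

namespace Veronese

open MvPolynomial

variable (n : ℕ)

variable (k : Type*) [Field k]

/-!
`φ_l(I_n)` is the kernel of `x_{ij} ↦ ε_{ij} t_i t_j`. Write `A` for the intersection of the other
components and `Q` for the ideal generated by the `φ_l(p⁺_{n,j})`. As `J_n = φ_l(I_n) ∩ A`, the
modular law reduces the claim to `Q ⊆ A ⊆ φ_l(I_n) + Q`.

For `Q ⊆ A`: modulo `2`, the canonical representatives of a fiber over `b ≥ (n-2, …, n-2)` form a
coset of the cycle space of the complete graph, and signs that are constant on the diagonal but do
not factor through the Veronese degree sum to zero over such a coset. With trivial signs the sum is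
the size of the coset, a power of `2`; so `φ_l(p⁺_{n,j})` maps to a nonzero multiple of a monomial
under the parametrization of `φ_l(I_n)`.

For `A ⊆ φ_l(I_n) + Q`: an `f ∈ A` also vanishes on the twisted Veronese varieties that arise from
the `l`-th by flipping signs on a nonempty proper set of edges at a vertex `i`. Averaging over these
flips shows that every degree `d` in the image of `f` is the degree of an exponent vector that is
positive on `n - 2` edges at `i`, so `d_i ≥ n - 2`. As `n` is odd and `∑ d_i` is even, some `d_j` is
even, hence `d ≥ (n-2, …, n-2) + e_j`, and `t^d` lies in the image of `Q`.
-/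

section Signs

variable {σ A : Type*} [CommRing A]

/-- The sign by which the sign change `ε` of the variables multiplies the monomial `x^u`. -/
def monomialSign (ε : σ → ℤˣ) (u : σ →₀ ℕ) : ℤˣ := u.prod fun s m => ε s ^ m

variable (A) in
/-- The sign change `x_s ↦ ε_s x_s`: for `A = k` and `σ = P`, these are the `ℤ₂`-twistings. -/
noncomputable def twist (ε : σ → ℤˣ) : MvPolynomial σ A →ₐ[A] MvPolynomial σ A :=
  aeval fun s => ((ε s : ℤ) : MvPolynomial σ A) * X s

lemma monomialSign_add (ε : σ → ℤˣ) (u v : σ →₀ ℕ) :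
    monomialSign ε (u + v) = monomialSign ε u * monomialSign ε v :=
  Finsupp.prod_add_index' (fun _ => pow_zero _) (fun _ _ _ => pow_add _ _ _)

@[simp]
lemma monomialSign_single (ε : σ → ℤˣ) (s : σ) (m : ℕ) :
    monomialSign ε (Finsupp.single s m) = ε s ^ m :=
  Finsupp.prod_single_index (pow_zero _)

@[simp]
lemma monomialSign_one (u : σ →₀ ℕ) : monomialSign 1 u = 1 := by
  simp [monomialSign]

lemma monomialSign_mul (ε η : σ → ℤˣ) (u : σ →₀ ℕ) :
    monomialSign (ε * η) u = monomialSign ε u * monomialSign η u := by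
  simp [monomialSign, mul_pow]

lemma sign_mul_self (ε : σ → ℤˣ) : ε * ε = 1 := funext fun s => Int.units_mul_self (ε s)

lemma twist_X (ε : σ → ℤˣ) (s : σ) :
    twist A ε (X s) = ((ε s : ℤ) : MvPolynomial σ A) * X s := by
  simp [twist]

lemma twist_monomial (ε : σ → ℤˣ) (u : σ →₀ ℕ) (a : A) :
    twist A ε (monomial u a) = monomial u (((monomialSign ε u : ℤ) : A) * a) := by
  rw [twist, aeval_monomial, monomial_eq, algebraMap_eq, C_mul]
  simp only [mul_pow, monomialSign, Finsupp.prod]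
  push_cast
  simp only [map_prod, map_pow, map_intCast, Finset.prod_mul_distrib]
  ring

lemma twist_twist (ε : σ → ℤˣ) (f : MvPolynomial σ A) : twist A ε (twist A ε f) = f := by
  have hcomp : (twist A ε).comp (twist A ε) = AlgHom.id A _ := by
    ext1 s
    simp [twist_X, ← mul_assoc, ← Int.cast_mul]
  exact DFunLike.congr_fun hcomp f

lemma units_intCast_injective (h2 : (2 : A) ≠ 0) :
    Function.Injective fun a : ℤˣ => ((a : ℤ) : A) := by
  have hne : (1 : A) ≠ -1 := fun h => h2 (by linear_combination h)
  intro a b hab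
  rcases Int.units_eq_one_or a with rfl | rfl <;> rcases Int.units_eq_one_or b with rfl | rfl <;>
    simp_all [eq_comm]

variable [DecidableEq σ]

/-- The sign change of the variables indexed by `S`. -/
def flipSign (S : Finset σ) (s : σ) : ℤˣ := if s ∈ S then -1 else 1

lemma monomialSign_flipSign (S : Finset σ) (u : σ →₀ ℕ) :
    monomialSign (flipSign S) u = ∏ s ∈ S, (-1) ^ u s := by
  rw [monomialSign, Finsupp.prod_of_support_subset u Finset.subset_union_left _ (by simp),
    ← Finset.prod_subset (Finset.subset_union_right (s₁ := u.support))]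
  · exact Finset.prod_congr rfl fun s hs => by simp [flipSign, hs]
  · intro s _ hs
    simp [flipSign, hs]

end Signs

section VeroneseDegree

variable {n}

/-- The off-diagonal positions `(i, m)`, `m ≠ i`, in row `i` of a symmetric matrix. -/
def edgesAt (i : Fin n) : Finset (Sym2 (Fin n)) := (⊤ : SimpleGraph (Fin n)).incidenceFinset i

lemma mem_edgesAt {i : Fin n} {s : Sym2 (Fin n)} : s ∈ edgesAt i ↔ ¬ s.IsDiag ∧ i ∈ s := by
  simp [edgesAt, SimpleGraph.incidenceSet]

lemma card_edgesAt (i : Fin n) : (edgesAt i).card = n - 1 := by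
  simp [edgesAt]

lemma wtN_mk (a b i : Fin n) :
    wtN n s(a, b) i = (if i = a then 1 else 0) + if i = b then 1 else 0 := rfl

lemma wtN_eq_ite (s : Sym2 (Fin n)) (i : Fin n) :
    wtN n s i = if i ∈ s then if s.IsDiag then 2 else 1 else 0 := by
  induction s using Sym2.ind with
  | _ a b => simp only [wtN_mk, Sym2.mem_iff, Sym2.mk_isDiag_iff]; grind

lemma sum_wtN (s : Sym2 (Fin n)) : ∑ i, wtN n s i = 2 := by
  induction s using Sym2.ind with
  | _ a b => simp [wtN_mk, Finset.sum_add_distrib]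

lemma prod_pow_wtN {M : Type*} [CommMonoid M] (τ : Fin n → M) (a b : Fin n) :
    ∏ i, τ i ^ wtN n s(a, b) i = τ a * τ b := by
  simp only [wtN_mk, pow_add, Finset.prod_mul_distrib, pow_ite, pow_one, pow_zero]
  simp

@[simp]
lemma VN_add (u v : Sym2 (Fin n) →₀ ℕ) : VN n (u + v) = VN n u + VN n v := by
  funext i
  simp [VN, add_mul, Finset.sum_add_distrib]

lemma VN_single (s : Sym2 (Fin n)) (m : ℕ) : VN n (Finsupp.single s m) = m • wtN n s := by
  funext i
  simp [VN, Finsupp.single_apply]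

lemma VN_apply (u : Sym2 (Fin n) →₀ ℕ) (i : Fin n) :
    VN n u i = 2 * u s(i, i) + ∑ s ∈ edgesAt i, u s := by
  have hterm (s : Sym2 (Fin n)) : u s * wtN n s i =
      (if s = s(i, i) then 2 * u s(i, i) else 0) + if s ∈ edgesAt i then u s else 0 := by
    simp only [wtN_eq_ite, mem_edgesAt]
    induction s using Sym2.ind with
    | _ a b => simp only [Sym2.mem_iff, Sym2.mk_isDiag_iff, Sym2.eq_iff]; grind
  simp [VN, hterm, Finset.sum_add_distrib]

lemma sum_VN (u : Sym2 (Fin n) →₀ ℕ) : ∑ i, VN n u i = 2 * u.degree := by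
  simp only [VN, Finsupp.degree_eq_sum]
  rw [Finset.sum_comm]
  simp only [← Finset.mul_sum, sum_wtN, ← Finset.sum_mul, mul_comm]

lemma prod_prod_pow_wtN {M : Type*} [CommMonoid M] (τ : Fin n → M) (u : Sym2 (Fin n) →₀ ℕ) :
    (u.prod fun s m => (∏ i, τ i ^ wtN n s i) ^ m) = ∏ i, τ i ^ VN n u i := by
  rw [Finsupp.prod_fintype _ _ (by simp)]
  simp only [VN, ← Finset.prod_pow, ← pow_mul, ← Finset.prod_pow_eq_pow_sum, mul_comm]
  exact Finset.prod_comm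

lemma exists_VN_eq_count (m : Multiset (Fin n)) (hm : Even m.card) :
    ∃ u, ∀ i, VN n u i = m.count i := by
  obtain ⟨N, hN⟩ := hm.exists_two_nsmul
  induction N generalizing m with
  | zero =>
    obtain rfl : m = 0 := by simpa using hN
    exact ⟨0, by simp [VN]⟩
  | succ N ih =>
    obtain ⟨a, m, rfl, hcard⟩ :=
      Multiset.card_eq_succ_iff.1 (hN.trans (by ring : _ = 2 * N + 1 + 1))
    obtain ⟨b, m, rfl, hcard_m⟩ := Multiset.card_eq_succ_iff.1 hcard
    obtain ⟨u, hu⟩ := ih m (hcard_m ▸ even_two_mul N) (by rw [hcard_m, smul_eq_mul])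
    refine ⟨Finsupp.single s(a, b) 1 + u, fun i => ?_⟩
    simp only [VN_add, VN_single, Pi.add_apply, hu, wtN_mk, Multiset.count_cons, one_smul]
    ring

lemma exists_VN_eq {b : Fin n → ℕ} (hb : Even (∑ i, b i)) : ∃ u, VN n u = b := by
  obtain ⟨u, hu⟩ := exists_VN_eq_count (Finsupp.toMultiset (Finsupp.equivFunOnFinite.symm b))
    (by simpa [Finsupp.card_toMultiset, Finsupp.sum_fintype] using hb)
  exact ⟨u, funext fun i => by simp [hu]⟩

end VeroneseDegree

section TwistedIdeal

variable {n k}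

variable (k) in
/-- The parametrization `x_{ij} ↦ ε_{ij} t_i t_j` of the twisted Veronese variety. -/
noncomputable def twistedVero (ε : Sym2 (Fin n) → ℤˣ) :
    R n k →ₐ[k] MvPolynomial (Fin n) k :=
  (veroHom n k).comp (twist k ε)

variable (k) in
/-- The image of `I_n` under the `ℤ₂`-twisting with signs `ε`. -/
noncomputable def twistedIdeal (ε : Sym2 (Fin n) → ℤˣ) : Ideal (R n k) :=
  RingHom.ker (twistedVero k ε)

/-- The signs `ε` are a character of the Veronese degree: `ε^u` depends on `V_n u` only. -/
def IsDegreeSign (ε : Sym2 (Fin n) → ℤˣ) : Prop :=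
  ∀ u v, VN n u = VN n v → monomialSign ε u = monomialSign ε v

/-- All diagonal variables carry the same sign. -/
def IsDiagConst (ε : Sym2 (Fin n) → ℤˣ) : Prop :=
  ∀ i j : Fin n, ε s(i, i) = ε s(j, j)

lemma IsDiagConst.mul {ε η : Sym2 (Fin n) → ℤˣ} (hε : IsDiagConst ε) (hη : IsDiagConst η) :
    IsDiagConst (ε * η) := fun i j => congrArg₂ (· * ·) (hε i j) (hη i j)

instance (ε : Sym2 (Fin n) → ℤˣ) : (twistedIdeal k ε).IsPrime := RingHom.ker_isPrime _

lemma mem_twistedIdeal {ε : Sym2 (Fin n) → ℤˣ} {f : R n k} :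
    f ∈ twistedIdeal k ε ↔ twistedVero k ε f = 0 := Iff.rfl

lemma IsTwisting.exists_eq_twist {φ : R n k ≃ₐ[k] R n k} (hφ : IsTwisting n k φ) :
    ∃ ε, φ.toAlgHom = twist k ε := by
  have hX (s : Sym2 (Fin n)) : ∃ e : ℤˣ, φ (X s) = ((e : ℤ) : R n k) * X s := by
    rcases hφ s with h | h
    · exact ⟨1, by simp [h]⟩
    · exact ⟨-1, by simp [h]⟩
  choose ε hε using hX
  exact ⟨ε, algHom_ext fun s => (hε s).trans (twist_X ε s).symm⟩

lemma map_Iideal_eq_twistedIdeal {φ : R n k ≃ₐ[k] R n k} {ε : Sym2 (Fin n) → ℤˣ}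
    (hφ : φ.toAlgHom = twist k ε) :
    Ideal.map φ.toAlgHom (Iideal n k) = twistedIdeal k ε := by
  ext f
  rw [Ideal.mem_map_iff_of_surjective φ.toAlgHom φ.surjective, hφ]
  constructor
  · rintro ⟨g, hg, rfl⟩
    rw [mem_twistedIdeal, twistedVero, AlgHom.comp_apply, twist_twist]
    exact hg
  · exact fun hf => ⟨twist k ε f, hf, twist_twist ε f⟩

lemma twistedVero_X (ε : Sym2 (Fin n) → ℤˣ) (a b : Fin n) :
    twistedVero k ε (X s(a, b)) =
      ((ε s(a, b) : ℤ) : MvPolynomial (Fin n) k) * (X a * X b) := by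
  simp [twistedVero, twist_X, veroHom]

lemma veroHom_monomial (u : Sym2 (Fin n) →₀ ℕ) (a : k) :
    veroHom n k (monomial u a) = monomial (Finsupp.equivFunOnFinite.symm (VN n u)) a := by
  have hX (s : Sym2 (Fin n)) : (Sym2.lift ⟨fun a b => (X a * X b : MvPolynomial (Fin n) k),
      fun a b => mul_comm _ _⟩ s) = ∏ i, X i ^ wtN n s i := by
    induction s using Sym2.ind with
    | _ a b => exact (prod_pow_wtN (X : Fin n → MvPolynomial (Fin n) k) a b).symm
  rw [veroHom, aeval_monomial, algebraMap_eq]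
  simp only [hX, prod_prod_pow_wtN]
  rw [monomial_eq, Finsupp.prod_fintype _ _ (by simp)]
  rfl

lemma twistedVero_monomial (ε : Sym2 (Fin n) → ℤˣ) (u : Sym2 (Fin n) →₀ ℕ) (a : k) :
    twistedVero k ε (monomial u a) =
      monomial (Finsupp.equivFunOnFinite.symm (VN n u)) (((monomialSign ε u : ℤ) : k) * a) := by
  rw [twistedVero, AlgHom.comp_apply, twist_monomial, veroHom_monomial]

lemma coeff_twistedVero (ε : Sym2 (Fin n) → ℤˣ) (f : R n k) (d : Fin n →₀ ℕ) :
    coeff d (twistedVero k ε f) =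
      ∑ u ∈ f.support with VN n u = d, ((monomialSign ε u : ℤ) : k) * coeff u f := by
  conv_lhs => rw [f.as_sum]
  simp only [map_sum, twistedVero_monomial, coeff_sum, coeff_monomial, Equiv.symm_apply_eq,
    Finset.sum_filter]
  rfl

lemma exists_VN_eq_of_coeff_twistedVero_ne_zero {ε : Sym2 (Fin n) → ℤˣ} {f : R n k}
    {d : Fin n →₀ ℕ} (hd : coeff d (twistedVero k ε f) ≠ 0) : ∃ u, VN n u = d := by
  rw [coeff_twistedVero] at hd
  obtain ⟨u, hu, -⟩ := Finset.exists_ne_zero_of_sum_ne_zero hd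
  exact ⟨u, (Finset.mem_filter.1 hu).2⟩

lemma IsDegreeSign.coeff_twistedVero_mul {ε η : Sym2 (Fin n) → ℤˣ} (hη : IsDegreeSign η)
    (f : R n k) (u : Sym2 (Fin n) →₀ ℕ) {d : Fin n →₀ ℕ} (hu : VN n u = d) :
    coeff d (twistedVero k (ε * η) f) =
      ((monomialSign η u : ℤ) : k) * coeff d (twistedVero k ε f) := by
  rw [coeff_twistedVero, coeff_twistedVero, Finset.mul_sum]
  refine Finset.sum_congr rfl fun v hv => ?_
  rw [monomialSign_mul, hη v u ((Finset.mem_filter.1 hv).2.trans hu.symm)]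
  push_cast
  ring

lemma twistedIdeal_le_of_isDegreeSign {ε η : Sym2 (Fin n) → ℤˣ} (h : IsDegreeSign (ε * η)) :
    twistedIdeal k ε ≤ twistedIdeal k η := by
  intro f hf
  ext d
  by_contra hd
  obtain ⟨u, hu⟩ := exists_VN_eq_of_coeff_twistedVero_ne_zero hd
  apply hd
  have hη : ε * (ε * η) = η := by rw [← mul_assoc, sign_mul_self, one_mul]
  rw [← hη, h.coeff_twistedVero_mul f u hu, mem_twistedIdeal.1 hf]
  simp

lemma isDegreeSign_of_twistedIdeal_le (h2 : (2 : k) ≠ 0) {ε η : Sym2 (Fin n) → ℤˣ}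
    (h : twistedIdeal k ε ≤ twistedIdeal k η) : IsDegreeSign (ε * η) := by
  intro u v huv
  let f : R n k := monomial u ((monomialSign ε u : ℤ) : k) - monomial v ((monomialSign ε v : ℤ) : k)
  have hf : f ∈ twistedIdeal k ε := by
    simp [mem_twistedIdeal, f, twistedVero_monomial, huv, ← Int.cast_mul]
  have hf' := mem_twistedIdeal.1 (h hf)
  simp only [f, map_sub, twistedVero_monomial, huv, sub_eq_zero, monomial_eq_monomial_iff] at hf'
  apply units_intCast_injective h2
  simp only [monomialSign_mul, Units.val_mul, Int.cast_mul]
  grind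

lemma Jideal_le_twistedIdeal_iff (h2 : (2 : k) ≠ 0) {ε : Sym2 (Fin n) → ℤˣ} :
    Jideal n k ≤ twistedIdeal k ε ↔ IsDiagConst ε := by
  have hminor (i j : Fin n) :
      X s(i, i) * X s(j, j) - X s(i, j) ^ 2 ∈ twistedIdeal k ε ↔ ε s(i, i) = ε s(j, j) := by
    have hsq : ((ε s(i, j) : ℤ) : MvPolynomial (Fin n) k) ^ 2 = 1 := by
      exact_mod_cast congrArg (fun a : ℤˣ => ((a : ℤ) : MvPolynomial (Fin n) k))
        (Int.units_sq (ε s(i, j)))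
    have hmap : twistedVero k ε (X s(i, i) * X s(j, j) - X s(i, j) ^ 2) =
        C (((ε s(i, i) * ε s(j, j) : ℤˣ) : ℤ) - (1 : ℤˣ) : k) * (X i * X j) ^ 2 := by
      simp only [map_sub, map_mul, map_pow, map_intCast, twistedVero_X, mul_pow, hsq]
      push_cast
      ring
    have hX : (X i * X j : MvPolynomial (Fin n) k) ^ 2 ≠ 0 :=
      pow_ne_zero 2 (mul_ne_zero (X_ne_zero i) (X_ne_zero j))
    rw [mem_twistedIdeal, hmap, mul_eq_zero_iff_right hX, C_eq_zero, sub_eq_zero]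
    exact (units_intCast_injective h2).eq_iff.trans mul_eq_one_iff_eq_inv |>.trans (by simp)
  rw [Jideal, Ideal.span_le]
  constructor
  · intro h i j
    rcases lt_trichotomy i j with hij | rfl | hji
    · exact (hminor i j).1 (h ⟨i, j, hij, rfl⟩)
    · rfl
    · exact ((hminor j i).1 (h ⟨j, i, hji, rfl⟩)).symm
  · rintro hε _ ⟨i, j, -, rfl⟩
    exact (hminor i j).2 (hε i j)

lemma exists_twistedIdeal_le {α : Type*} [Finite α] {ε : α → Sym2 (Fin n) → ℤˣ}
    {η : Sym2 (Fin n) → ℤˣ} (h : ⨅ i, twistedIdeal k (ε i) ≤ twistedIdeal k η) :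
    ∃ i, twistedIdeal k (ε i) ≤ twistedIdeal k η := by
  have := Fintype.ofFinite α
  rw [← Finset.inf_univ_eq_iInf, Ideal.IsPrime.inf_le' inferInstance] at h
  simpa using h

end TwistedIdeal

section CanonicalFiber

variable {n}

/-- The off-diagonal positions of a symmetric matrix, i.e. the edges of the complete graph. -/
abbrev Edge (n : ℕ) := {s : Sym2 (Fin n) // ¬ s.IsDiag}

/-- The vertex degrees modulo `2` of a set of edges, which is encoded as a vector over `ℤ/2`. -/
def degreeParity : (Edge n → ZMod 2) →+ (Fin n → ZMod 2) where
  toFun x i := ∑ s, x s * (wtN n s i : ZMod 2)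
  map_zero' := by ext i; simp
  map_add' x y := by ext i; simp [add_mul, Finset.sum_add_distrib]

/-- The off-diagonal part modulo `2` of an exponent vector. -/
def offDiagParity (u : Sym2 (Fin n) →₀ ℕ) : Edge n → ZMod 2 := fun s => (u s : ZMod 2)

/-- The canonical representatives in the fiber over `b` of the classes modulo the principal minor
lattice: these are the exponent vectors occurring in `pplusAt`. -/
noncomputable def canonicalFiber (b : Fin n → ℕ) : Finset (Sym2 (Fin n) →₀ ℕ) :=
  (fiberFinset n b).filter fun u => ∀ s : Sym2 (Fin n), ¬ s.IsDiag → u s ≤ 1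

lemma mem_canonicalFiber {b : Fin n → ℕ} {u : Sym2 (Fin n) →₀ ℕ} :
    u ∈ canonicalFiber b ↔ VN n u = b ∧ ∀ s : Sym2 (Fin n), ¬ s.IsDiag → u s ≤ 1 := by
  simp [canonicalFiber, fiberFinset, fiber]

lemma degreeParity_offDiagParity (u : Sym2 (Fin n) →₀ ℕ) :
    degreeParity (offDiagParity u) = fun i => (VN n u i : ZMod 2) := by
  funext i
  have hdiag (s : Sym2 (Fin n)) (hs : s.IsDiag) : (wtN n s i : ZMod 2) = 0 := by
    rw [wtN_eq_ite, if_pos hs]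
    split_ifs <;> rfl
  simp only [degreeParity, offDiagParity, VN, AddMonoidHom.coe_mk, ZeroHom.coe_mk, Nat.cast_sum,
    Nat.cast_mul]
  rw [← Fintype.sum_subtype_add_sum_subtype (fun s : Sym2 (Fin n) => s.IsDiag)]
  simp [fun s : {s : Sym2 (Fin n) // s.IsDiag} => hdiag s s.2]

lemma offDiagParity_injOn (b : Fin n → ℕ) :
    Set.InjOn offDiagParity (canonicalFiber b : Set (Sym2 (Fin n) →₀ ℕ)) := by
  intro u hu v hv huv
  obtain ⟨hu, hu1⟩ := mem_canonicalFiber.1 hu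
  obtain ⟨hv, hv1⟩ := mem_canonicalFiber.1 hv
  have hoff (s : Sym2 (Fin n)) (hs : ¬ s.IsDiag) : u s = v s := by
    have hmod := (ZMod.natCast_eq_natCast_iff' _ _ _).1 (congrFun huv ⟨s, hs⟩)
    rwa [Nat.mod_eq_of_lt (Nat.lt_succ_of_le (hu1 s hs)),
      Nat.mod_eq_of_lt (Nat.lt_succ_of_le (hv1 s hs))] at hmod
  ext s
  by_cases hs : s.IsDiag
  · obtain ⟨i, rfl⟩ : ∃ i, s(i, i) = s := ⟨_, Sym2.diag_diagElem hs⟩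
    have hi := congrFun (hu.trans hv.symm) i
    rw [VN_apply, VN_apply, Finset.sum_congr rfl fun s hs => hoff s (mem_edgesAt.1 hs).1] at hi
    exact mul_left_cancel₀ two_ne_zero (add_right_cancel hi)
  · exact hoff s hs

lemma exists_le_one_offDiagParity_eq (x : Edge n → ZMod 2) :
    ∃ w, (∀ s, w s ≤ 1) ∧ (∀ i, w s(i, i) = 0) ∧ offDiagParity w = x := by
  refine ⟨Finsupp.equivFunOnFinite.symm fun s => if hs : s.IsDiag then 0 else (x ⟨s, hs⟩).val,
    fun s => ?_, fun i => by simp, funext fun s => by simp [offDiagParity, s.2]⟩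
  rw [Finsupp.equivFunOnFinite_symm_apply_apply]
  split_ifs
  · exact zero_le_one
  · exact Nat.le_of_lt_succ (ZMod.val_lt (n := 2) _)

lemma exists_mem_canonicalFiber {b : Fin n → ℕ} (hb : ∀ i, n - 2 ≤ b i) {x : Edge n → ZMod 2}
    (hx : degreeParity x = fun i => (b i : ZMod 2)) :
    ∃ u ∈ canonicalFiber b, offDiagParity u = x := by
  obtain ⟨w, hw_le, hw_diag, hw_parity⟩ := exists_le_one_offDiagParity_eq x
  have hVw_mod (i : Fin n) : VN n w i % 2 = b i % 2 := by
    rw [← ZMod.natCast_eq_natCast_iff', ← congrFun (degreeParity_offDiagParity w) i, hw_parity, hx]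
  have hVw_le (i : Fin n) : VN n w i ≤ b i := by
    have hle : VN n w i ≤ n - 1 := by
      rw [VN_apply, ← card_edgesAt i, Finset.card_eq_sum_ones]
      simpa [hw_diag] using Finset.sum_le_sum fun s (_ : s ∈ edgesAt i) => hw_le s
    have := hb i
    have := hVw_mod i
    omega
  let u : Sym2 (Fin n) →₀ ℕ := w + ∑ i, Finsupp.single s(i, i) ((b i - VN n w i) / 2)
  have hu_diag (i : Fin n) : u s(i, i) = (b i - VN n w i) / 2 := by
    simp [u, hw_diag, Finsupp.single_apply]
  have hu_off (s : Sym2 (Fin n)) (hs : ¬ s.IsDiag) : u s = w s := by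
    have hne (i : Fin n) : s(i, i) ≠ s := by rintro rfl; exact hs rfl
    simp [u, hne]
  refine ⟨u, mem_canonicalFiber.2 ⟨funext fun i => ?_, fun s hs => hu_off s hs ▸ hw_le s⟩, ?_⟩
  · have hVw := VN_apply w i
    have hedges : ∑ s ∈ edgesAt i, u s = ∑ s ∈ edgesAt i, w s :=
      Finset.sum_congr rfl fun s hs => hu_off s (mem_edgesAt.1 hs).1
    rw [VN_apply, hu_diag, hedges]
    rw [hw_diag] at hVw
    have := hVw_le i
    have := hVw_mod i
    omega
  · rw [← hw_parity]
    exact funext fun s => by rw [offDiagParity, hu_off s s.2, offDiagParity]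

lemma sum_canonicalFiber {M : Type*} [AddCommMonoid M] {b : Fin n → ℕ} (hb : ∀ i, n - 2 ≤ b i)
    (g : (Edge n → ZMod 2) → M) :
    ∑ u ∈ canonicalFiber b, g (offDiagParity u) =
      ∑ x with degreeParity x = fun i => (b i : ZMod 2), g x := by
  refine Finset.sum_nbij offDiagParity (fun u hu => ?_) (offDiagParity_injOn b) (fun x hx => ?_)
    fun _ _ => rfl
  · simp [degreeParity_offDiagParity, (mem_canonicalFiber.1 hu).1]
  · exact exists_mem_canonicalFiber hb (by simpa using hx)

lemma card_canonicalFiber_dvd {b : Fin n → ℕ} (hb : ∀ i, n - 2 ≤ b i) (hsum : Even (∑ i, b i)) :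
    (canonicalFiber b).card ∣ 2 ^ Fintype.card (Edge n) := by
  obtain ⟨u, hu⟩ := exists_VN_eq hsum
  have hrange : (fun i => (b i : ZMod 2)) ∈ Set.range (degreeParity (n := n)) :=
    ⟨offDiagParity u, by rw [degreeParity_offDiagParity, hu]⟩
  have hker : (canonicalFiber b).card = Nat.card (degreeParity (n := n)).ker := by
    rw [Finset.card_eq_sum_ones, sum_canonicalFiber hb fun _ => 1, ← Finset.card_eq_sum_ones,
      AddMonoidHom.card_fiber_eq_of_mem_range _ hrange ⟨0, map_zero _⟩, ← Fintype.card_subtype,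
      ← Nat.card_eq_fintype_card]
    rfl
  rw [hker]
  convert AddSubgroup.card_addSubgroup_dvd_card (degreeParity (n := n)).ker using 1
  simp

end CanonicalFiber

section SignSum

variable {n k}

/-- The product of the signs of the edges in a set, encoded as in `degreeParity`. -/
def edgeSign (ε : Sym2 (Fin n) → ℤˣ) (x : Edge n → ZMod 2) : ℤˣ :=
  ∏ s : Edge n, ε s ^ x s

lemma edgeSign_add (ε : Sym2 (Fin n) → ℤˣ) (x y : Edge n → ZMod 2) :
    edgeSign ε (x + y) = edgeSign ε x * edgeSign ε y := by
  simp [edgeSign, uzpow_add, Finset.prod_mul_distrib]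

lemma IsDiagConst.exists_eq {ε : Sym2 (Fin n) → ℤˣ} (hε : IsDiagConst ε) :
    ∃ t, ∀ i, ε s(i, i) = t := by
  cases isEmpty_or_nonempty (Fin n)
  · exact ⟨1, isEmptyElim⟩
  · exact ⟨_, fun i => hε i (Classical.arbitrary _)⟩

lemma monomialSign_eq_pow_mul_edgeSign {ε : Sym2 (Fin n) → ℤˣ} {t : ℤˣ}
    (ht : ∀ i, ε s(i, i) = t) (u : Sym2 (Fin n) →₀ ℕ) :
    monomialSign ε u = t ^ u.degree * edgeSign (fun s => t * ε s) (offDiagParity u) := by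
  have hdiag (s : {s : Sym2 (Fin n) // s.IsDiag}) : t * ε s = 1 := by
    rw [← Sym2.diag_diagElem s.2, Sym2.diag, ht, Int.units_mul_self]
  have hterm (s : Sym2 (Fin n)) : ε s ^ u s = t ^ u s * (t * ε s) ^ u s := by
    rw [← mul_pow, ← mul_assoc, Int.units_mul_self, one_mul]
  rw [monomialSign, Finsupp.prod_fintype _ _ (by simp), Finsupp.degree_eq_sum,
    ← Finset.prod_pow_eq_pow_sum]
  simp only [hterm, Finset.prod_mul_distrib, edgeSign, offDiagParity, uzpow_natCast]
  rw [← Fintype.prod_subtype_mul_prod_subtype (fun s : Sym2 (Fin n) => s.IsDiag)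
    fun s => (t * ε s) ^ u s]
  simp [hdiag]

lemma sum_edgeSign_eq_zero {ε : Sym2 (Fin n) → ℤˣ} {z : Edge n → ZMod 2}
    (hz : degreeParity z = 0) (hεz : edgeSign ε z = -1) (β : Fin n → ZMod 2) :
    ∑ x with degreeParity x = β, (edgeSign ε x : ℤ) = 0 := by
  have hneg : ∑ x with degreeParity x = β, (edgeSign ε x : ℤ) =
      ∑ x with degreeParity x = β, -(edgeSign ε x : ℤ) :=
    Finset.sum_equiv (Equiv.addRight z) (by simp [hz]) (by simp [edgeSign_add, hεz])
  rw [Finset.sum_neg_distrib] at hneg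
  linarith

lemma degree_eq_of_VN_eq {u v : Sym2 (Fin n) →₀ ℕ} (h : VN n u = VN n v) :
    u.degree = v.degree := by
  have := sum_VN u
  rw [h, sum_VN] at this
  omega

lemma sum_monomialSign_canonicalFiber_eq_zero {ε : Sym2 (Fin n) → ℤˣ} (hdiag : IsDiagConst ε)
    (hε : ¬ IsDegreeSign ε) {b : Fin n → ℕ} (hb : ∀ i, n - 2 ≤ b i) :
    ∑ u ∈ canonicalFiber b, (monomialSign ε u : ℤ) = 0 := by
  obtain ⟨t, ht⟩ := hdiag.exists_eq
  simp only [IsDegreeSign, not_forall] at hε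
  obtain ⟨v, w, hvw, hsign⟩ := hε
  let z := offDiagParity v + offDiagParity w
  have hz : degreeParity z = 0 := by
    simp only [z, map_add, degreeParity_offDiagParity, hvw]
    exact funext fun i => CharTwo.add_self_eq_zero (VN n w i : ZMod 2)
  have hεz : edgeSign (fun s => t * ε s) z = -1 := by
    rw [edgeSign_add]
    simp only [monomialSign_eq_pow_mul_edgeSign ht, degree_eq_of_VN_eq hvw, mul_right_inj,
      ← ne_eq, Int.units_ne_iff_eq_neg] at hsign
    rw [hsign, neg_mul, Int.units_mul_self]
  have hdeg {u} (hu : u ∈ canonicalFiber b) : u.degree = (∑ i, b i) / 2 := by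
    rw [← (mem_canonicalFiber.1 hu).1, sum_VN, Nat.mul_div_cancel_left _ two_pos]
  calc
    _ = ∑ u ∈ canonicalFiber b,
          (t ^ ((∑ i, b i) / 2) : ℤ) * edgeSign (fun s => t * ε s) (offDiagParity u) :=
      Finset.sum_congr rfl fun u hu => by simp [monomialSign_eq_pow_mul_edgeSign ht, hdeg hu]
    _ = (t ^ ((∑ i, b i) / 2) : ℤ) *
          ∑ x with degreeParity x = fun i => (b i : ZMod 2),
            (edgeSign (fun s => t * ε s) x : ℤ) := by
      rw [← Finset.mul_sum, sum_canonicalFiber hb fun x => (edgeSign (fun s => t * ε s) x : ℤ)]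
    _ = 0 := by rw [sum_edgeSign_eq_zero hz hεz, mul_zero]

end SignSum

section GeneratingFunction

variable {n k}

lemma pplusAt_eq_sum (b : Fin n → ℕ) :
    pplusAt n k b = ∑ u ∈ canonicalFiber b, monomial u 1 := rfl

lemma coeff_pplusAt (b : Fin n → ℕ) (u : Sym2 (Fin n) →₀ ℕ) :
    coeff u (pplusAt n k b) = if u ∈ canonicalFiber b then 1 else 0 := by
  simp [pplusAt_eq_sum, coeff_sum, coeff_monomial]

lemma support_pplusAt (b : Fin n → ℕ) : (pplusAt n k b).support = canonicalFiber b := by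
  ext u
  simp [coeff_pplusAt]

lemma vHomog_pplusAt (b : Fin n → ℕ) : VHomog n k (pplusAt n k b) b := by
  intro u hu
  rw [support_pplusAt] at hu
  exact (mem_canonicalFiber.1 hu).1

lemma canonicalFiber_nonempty {b : Fin n → ℕ} (hb : ∀ i, n - 2 ≤ b i) (hsum : Even (∑ i, b i)) :
    (canonicalFiber b).Nonempty :=
  Finset.card_pos.1 (Nat.pos_of_dvd_of_pos (card_canonicalFiber_dvd hb hsum) (by positivity))

lemma VHomog.isHomogeneous {f : R n k} {b : Fin n → ℕ} (hf : VHomog n k f b) :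
    f.IsHomogeneous ((∑ i, b i) / 2) := by
  intro u hu
  have hdeg : Finsupp.weight 1 u = u.degree :=
    (DFunLike.congr_fun Finsupp.degree_eq_weight_one u).symm
  rw [hdeg, ← hf u (mem_support_iff.2 hu), sum_VN, Nat.mul_div_cancel_left _ two_pos]

lemma totalDegree_pplusAt {b : Fin n → ℕ} (hb : ∀ i, n - 2 ≤ b i) (hsum : Even (∑ i, b i)) :
    (pplusAt n k b).totalDegree = (∑ i, b i) / 2 := by
  refine (vHomog_pplusAt b).isHomogeneous.totalDegree ?_
  rw [← support_nonempty, support_pplusAt]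
  exact canonicalFiber_nonempty hb hsum

lemma twistedVero_twist_pplusAt (ε η : Sym2 (Fin n) → ℤˣ) (b : Fin n → ℕ) :
    twistedVero k ε (twist k η (pplusAt n k b)) =
      monomial (Finsupp.equivFunOnFinite.symm b)
        ((∑ u ∈ canonicalFiber b, (monomialSign (ε * η) u : ℤ) : ℤ) : k) := by
  simp only [pplusAt_eq_sum, map_sum, twist_monomial, twistedVero_monomial, Int.cast_sum]
  exact Finset.sum_congr rfl fun u hu => by
    simp [(mem_canonicalFiber.1 hu).1, monomialSign_mul]

lemma twist_pplusAt_mem_twistedIdeal {ε η : Sym2 (Fin n) → ℤˣ} (hdiag : IsDiagConst (ε * η))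
    (hεη : ¬ IsDegreeSign (ε * η)) {b : Fin n → ℕ} (hb : ∀ i, n - 2 ≤ b i) :
    twist k η (pplusAt n k b) ∈ twistedIdeal k ε := by
  rw [mem_twistedIdeal, twistedVero_twist_pplusAt,
    sum_monomialSign_canonicalFiber_eq_zero hdiag hεη hb, Int.cast_zero, monomial_zero]

lemma twistedVero_twist_pplusAt_self (ε : Sym2 (Fin n) → ℤˣ) (b : Fin n → ℕ) :
    twistedVero k ε (twist k ε (pplusAt n k b)) =
      monomial (Finsupp.equivFunOnFinite.symm b) ((canonicalFiber b).card : k) := by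
  simp [twistedVero_twist_pplusAt, sign_mul_self]

lemma card_canonicalFiber_ne_zero (h2 : (2 : k) ≠ 0) {b : Fin n → ℕ} (hb : ∀ i, n - 2 ≤ b i)
    (hsum : Even (∑ i, b i)) : ((canonicalFiber b).card : k) ≠ 0 := by
  intro h
  have hdvd := Nat.cast_dvd_cast (α := k) (card_canonicalFiber_dvd hb hsum)
  rw [h, zero_dvd_iff, Nat.cast_pow] at hdvd
  exact pow_ne_zero _ (by exact_mod_cast h2) hdvd

end GeneratingFunction

section DegreeBound

variable {n k}

lemma isDiagConst_flipSign {S : Finset (Sym2 (Fin n))} {i : Fin n} (hS : S ⊆ edgesAt i) :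
    IsDiagConst (flipSign S) := by
  have hdiag (a : Fin n) : s(a, a) ∉ S := fun ha => (mem_edgesAt.1 (hS ha)).1 rfl
  intro a b
  rw [flipSign, flipSign, if_neg (hdiag a), if_neg (hdiag b)]

lemma IsDegreeSign.eq_empty_or_eq_edgesAt {S : Finset (Sym2 (Fin n))} {i : Fin n}
    (hS : S ⊆ edgesAt i) (h : IsDegreeSign (flipSign S)) : S = ∅ ∨ S = edgesAt i := by
  have hS_mem {s} (hs : s ∈ S) := mem_edgesAt.1 (hS hs)
  have hconst (a b : Fin n) (ha : a ≠ i) (hb : b ≠ i) : s(i, a) ∈ S → s(i, b) ∈ S := by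
    have hVN : VN n (Finsupp.single s(i, a) 1 + Finsupp.single s(i, b) 1) =
        VN n (Finsupp.single s(i, i) 1 + Finsupp.single s(a, b) 1) := by
      funext m
      simp only [VN_add, VN_single, Pi.add_apply, Pi.smul_apply, wtN_mk]
      ring
    have hab : s(a, b) ∉ S := fun hab => by
      simpa [ha.symm, hb.symm] using (hS_mem hab).2
    have hii : s(i, i) ∉ S := fun hii => (hS_mem hii).1 rfl
    have hsign := h _ _ hVN
    intro ha
    by_contra hb
    simp [monomialSign_add, flipSign, hab, hii, ha, hb] at hsign
  rcases S.eq_empty_or_nonempty with hempty | ⟨s, hs⟩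
  · exact Or.inl hempty
  refine Or.inr (hS.antisymm fun s' hs' => ?_)
  obtain ⟨a, rfl⟩ := (hS_mem hs).2
  obtain ⟨hdiag, b, rfl⟩ := mem_edgesAt.1 hs'
  exact hconst a b (Ne.symm (hS_mem hs).1) (Ne.symm hdiag) hs

lemma monomialSign_flipSign_edgesAt (i : Fin n) (u : Sym2 (Fin n) →₀ ℕ) :
    monomialSign (flipSign (edgesAt i)) u = (-1) ^ VN n u i := by
  rw [monomialSign_flipSign, Finset.prod_pow_eq_pow_sum, VN_apply, pow_add, pow_mul, neg_one_sq,
    one_pow, one_mul]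

/-- Summing over all sign changes in `T` against the character with values `c` projects onto the
monomials whose exponents on `T` have the parities prescribed by `c`. -/
lemma sum_powerset_mul_coeff_twistedVero (ε : Sym2 (Fin n) → ℤˣ) (f : R n k) (d : Fin n →₀ ℕ)
    (T : Finset (Sym2 (Fin n))) (c : Sym2 (Fin n) → k) :
    ∑ S ∈ T.powerset, (∏ s ∈ S, c s) * coeff d (twistedVero k (ε * flipSign S) f) =
      ∑ u ∈ f.support with VN n u = d,
        ((monomialSign ε u : ℤ) : k) * coeff u f * ∏ s ∈ T, (1 + c s * (-1) ^ u s) := by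
  simp only [coeff_twistedVero, monomialSign_mul, monomialSign_flipSign, Finset.prod_one_add,
    Finset.mul_sum, Finset.prod_mul_distrib]
  rw [Finset.sum_comm]
  refine Finset.sum_congr rfl fun u _ => Finset.sum_congr rfl fun S _ => ?_
  push_cast
  ring

lemma sum_powerset_coeff_twistedVero_eq_two_mul {ε : Sym2 (Fin n) → ℤˣ} {f : R n k} {i : Fin n}
    (hf : ∀ S ⊆ edgesAt i, S ≠ ∅ → S ≠ edgesAt i → twistedVero k (ε * flipSign S) f = 0)
    {d : Fin n →₀ ℕ} {u : Sym2 (Fin n) →₀ ℕ} (hu : VN n u = d) {A : Finset (Sym2 (Fin n))}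
    (hA : A ⊆ edgesAt i) (hA_ne : A.Nonempty) (hA_even : Even (A.card + d i)) :
    ∑ S ∈ (edgesAt i).powerset, (∏ s ∈ S, if s ∈ A then -1 else 1) *
      coeff d (twistedVero k (ε * flipSign S) f) = 2 * coeff d (twistedVero k ε f) := by
  have hdegree : IsDegreeSign (flipSign (edgesAt i)) := fun v w hvw => by
    rw [monomialSign_flipSign_edgesAt, monomialSign_flipSign_edgesAt, hvw]
  have hsign : ((-1) ^ A.card * (-1) ^ d i : k) = 1 := by rw [← pow_add, hA_even.neg_one_pow]
  rw [Finset.sum_eq_add_of_mem ∅ (edgesAt i) (Finset.empty_mem_powerset _)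
    (Finset.mem_powerset_self _) (hA_ne.mono hA).ne_empty.symm fun S hS hne => by
      rw [hf S (Finset.mem_powerset.1 hS) hne.1 hne.2, coeff_zero, mul_zero]]
  have hprod : ∏ s ∈ edgesAt i, (if s ∈ A then -1 else 1 : k) = (-1) ^ A.card := by
    rw [Finset.prod_ite_mem, Finset.inter_eq_right.2 hA, Finset.prod_const]
  have hempty : ε * flipSign ∅ = ε := funext fun s => by simp [flipSign]
  rw [hprod, hdegree.coeff_twistedVero_mul f u hu, monomialSign_flipSign_edgesAt, hu, hempty,
    Finset.prod_empty, one_mul, ← mul_assoc]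
  push_cast
  rw [hsign]
  ring

lemma card_le_of_coeff_twistedVero_ne_zero (h2 : (2 : k) ≠ 0) {ε : Sym2 (Fin n) → ℤˣ} {f : R n k}
    {i : Fin n}
    (hf : ∀ S ⊆ edgesAt i, S ≠ ∅ → S ≠ edgesAt i → twistedVero k (ε * flipSign S) f = 0)
    {d : Fin n →₀ ℕ} (hd : coeff d (twistedVero k ε f) ≠ 0) {A : Finset (Sym2 (Fin n))}
    (hA : A ⊆ edgesAt i) (hA_even : Even (A.card + d i)) : A.card ≤ d i := by
  rcases A.eq_empty_or_nonempty with rfl | hA_ne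
  · simp
  obtain ⟨v, hv⟩ := exists_VN_eq_of_coeff_twistedVero_ne_zero hd
  have hsum := sum_powerset_coeff_twistedVero_eq_two_mul hf hv hA hA_ne hA_even
  rw [sum_powerset_mul_coeff_twistedVero] at hsum
  obtain ⟨u, hu, hterm⟩ := Finset.exists_ne_zero_of_sum_ne_zero (hsum ▸ mul_ne_zero h2 hd)
  have hodd (s) (hs : s ∈ A) : 1 ≤ u s := by
    have hfactor := Finset.prod_ne_zero_iff.1 (right_ne_zero_of_mul hterm) s (hA hs)
    rw [if_pos hs] at hfactor
    contrapose! hfactor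
    simp [Nat.lt_one_iff.1 hfactor]
  calc A.card = ∑ s ∈ A, 1 := Finset.card_eq_sum_ones A
    _ ≤ ∑ s ∈ A, u s := Finset.sum_le_sum hodd
    _ ≤ ∑ s ∈ edgesAt i, u s := Finset.sum_le_sum_of_subset hA
    _ ≤ VN n u i := by rw [VN_apply]; exact Nat.le_add_left _ _
    _ = d i := congrFun (Finset.mem_filter.1 hu).2 i

lemma sub_two_le_of_coeff_twistedVero_ne_zero (h2 : (2 : k) ≠ 0) {ε : Sym2 (Fin n) → ℤˣ}
    {f : R n k} {i : Fin n}
    (hf : ∀ S ⊆ edgesAt i, S ≠ ∅ → S ≠ edgesAt i → twistedVero k (ε * flipSign S) f = 0)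
    {d : Fin n →₀ ℕ} (hd : coeff d (twistedVero k ε f) ≠ 0) : n - 2 ≤ d i := by
  by_cases hparity : Even ((edgesAt i).card + d i)
  · have := card_le_of_coeff_twistedVero_ne_zero h2 hf hd subset_rfl hparity
    rw [card_edgesAt] at this
    omega
  · obtain ⟨A, hA, hcard⟩ := Finset.exists_subset_card_eq
      (show n - 2 ≤ (edgesAt i).card by rw [card_edgesAt]; omega)
    rcases le_total n 2 with hn | hn
    · omega
    rw [← hcard]
    refine card_le_of_coeff_twistedVero_ne_zero h2 hf hd hA ?_
    rw [card_edgesAt] at hparity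
    grind

end DegreeBound

section OddDegree

variable {n k}

/-- The Veronese degree `(n-2, …, n-2) + e_j` of `p⁺_{n,j}`. -/
def oddDegree (j i : Fin n) : ℕ := (n - 2) + if i = j then 1 else 0

lemma le_oddDegree (j i : Fin n) : n - 2 ≤ oddDegree j i := Nat.le_add_right _ _

lemma sum_oddDegree (hn : 2 ≤ n) (j : Fin n) : ∑ i, oddDegree j i = (n - 1) ^ 2 := by
  obtain ⟨m, rfl⟩ := Nat.exists_eq_add_of_le hn
  simp only [oddDegree, Finset.sum_add_distrib, Finset.sum_const, Finset.card_univ,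
    Fintype.card_fin, Finset.sum_ite_eq', Finset.mem_univ, if_true, smul_eq_mul,
    Nat.add_sub_cancel_left]
  have hpred : 2 + m - 1 = m + 1 := by omega
  rw [hpred]
  ring

lemma even_sum_oddDegree (hn : 2 ≤ n) (hodd : Odd n) (j : Fin n) :
    Even (∑ i, oddDegree j i) := by
  rw [sum_oddDegree hn]
  exact (Nat.Odd.sub_odd hodd odd_one).pow_of_ne_zero two_ne_zero

lemma exists_oddDegree_add_VN_eq (hn : 2 ≤ n) (hodd : Odd n) {d : Fin n → ℕ}
    (hsum : Even (∑ i, d i)) (hle : ∀ i, n - 2 ≤ d i) : ∃ j w, oddDegree j + VN n w = d := by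
  obtain ⟨j, hj⟩ : ∃ j, Even (d j) := by
    by_contra! h
    rw [← Nat.not_odd_iff_even, Finset.odd_sum_iff_odd_card_odd,
      Finset.filter_true_of_mem fun i _ => Nat.not_even_iff_odd.1 (h i), Finset.card_fin] at hsum
    exact hsum hodd
  have hle_d : oddDegree j ≤ d := fun i => by
    have := hle i
    unfold oddDegree
    split_ifs with hi
    · subst hi
      grind
    · omega
  obtain ⟨w, hw⟩ : ∃ w, VN n w = d - oddDegree j := by
    apply exists_VN_eq
    simp only [Pi.sub_apply, Finset.sum_tsub_distrib _ fun i _ => hle_d i]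
    exact hsum.tsub (even_sum_oddDegree hn hodd j)
  exact ⟨j, w, hw ▸ add_tsub_cancel_of_le hle_d⟩

end OddDegree

section Intersection

variable {n k}

lemma mem_ker_sup_of_forall_monomial_mem {A τ : Type*} [CommRing A] [Algebra k A]
    (ψ : A →ₐ[k] MvPolynomial τ k) {Q : Ideal A} {f : A}
    (hf : ∀ d ∈ (ψ f).support, ∃ g ∈ Q, ψ g = monomial d 1) : f ∈ RingHom.ker ψ ⊔ Q := by
  choose! g hg_mem hg using hf
  let h := ∑ d ∈ (ψ f).support, coeff d (ψ f) • g d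
  have hh : h ∈ Q := Q.sum_mem fun d hd => Submodule.smul_of_tower_mem Q _ (hg_mem d hd)
  have hψ : ψ h = ψ f := by
    conv_rhs => rw [(ψ f).as_sum]
    rw [map_sum]
    exact Finset.sum_congr rfl fun d hd => by simp [hg d hd, smul_monomial]
  rw [← sub_add_cancel f h]
  refine Submodule.add_mem_sup ?_ hh
  rw [RingHom.mem_ker, map_sub, hψ, sub_self]

variable (k) in
/-- The ideal generated by `φ(p⁺_{n,1}), …, φ(p⁺_{n,n})` for the `ℤ₂`-twisting `φ` with signs
`ε`. -/
noncomputable def pplusIdeal (ε : Sym2 (Fin n) → ℤˣ) : Ideal (R n k) :=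
  Ideal.span (Set.range fun j => twist k ε (pplusAt n k (oddDegree j)))

lemma exists_mem_pplusIdeal_twistedVero_eq_monomial (h2 : (2 : k) ≠ 0) (hn : 2 ≤ n)
    (hodd : Odd n) (ε : Sym2 (Fin n) → ℤˣ) {d : Fin n →₀ ℕ} (hsum : Even (∑ i, d i))
    (hle : ∀ i, n - 2 ≤ d i) :
    ∃ g ∈ pplusIdeal k ε, twistedVero k ε g = monomial d 1 := by
  obtain ⟨j, w, hd⟩ := exists_oddDegree_add_VN_eq hn hodd hsum hle
  have hcard := card_canonicalFiber_ne_zero h2 (le_oddDegree j) (even_sum_oddDegree hn hodd j)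
  refine ⟨twist k ε (monomial w ((canonicalFiber (oddDegree j)).card : k)⁻¹) *
    twist k ε (pplusAt n k (oddDegree j)),
    Ideal.mul_mem_left _ _ (Ideal.subset_span ⟨j, rfl⟩), ?_⟩
  rw [map_mul, twistedVero_twist_pplusAt_self, twistedVero, AlgHom.comp_apply, twist_twist,
    veroHom_monomial, monomial_mul, inv_mul_cancel₀ hcard]
  have hexp : Finsupp.equivFunOnFinite.symm (VN n w) +
      Finsupp.equivFunOnFinite.symm (oddDegree j) = d :=
    DFunLike.coe_injective (by simpa [add_comm] using hd)
  rw [hexp]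

variable {α : Type*} {ε : α → Sym2 (Fin n) → ℤˣ}

lemma isDiagConst_of_Jideal_eq_iInf (h2 : (2 : k) ≠ 0)
    (hdec : Jideal n k = ⨅ i, twistedIdeal k (ε i)) (i : α) : IsDiagConst (ε i) :=
  (Jideal_le_twistedIdeal_iff h2).1 (hdec.trans_le (iInf_le _ i))

lemma not_isDegreeSign_mul (hinj : Function.Injective fun i => twistedIdeal k (ε i)) {i l : α}
    (hil : i ≠ l) : ¬ IsDegreeSign (ε i * ε l) := fun h =>
  hil (hinj (le_antisymm (twistedIdeal_le_of_isDegreeSign h)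
    (twistedIdeal_le_of_isDegreeSign (mul_comm (ε i) (ε l) ▸ h))))

lemma pplusIdeal_le_iInf_ne (h2 : (2 : k) ≠ 0)
    (hinj : Function.Injective fun i => twistedIdeal k (ε i))
    (hdec : Jideal n k = ⨅ i, twistedIdeal k (ε i)) (l : α) :
    pplusIdeal k (ε l) ≤ ⨅ (i) (_ : i ≠ l), twistedIdeal k (ε i) := by
  have hdiag := isDiagConst_of_Jideal_eq_iInf h2 hdec
  refine le_iInf₂ fun i hil => Ideal.span_le.2 ?_
  rintro _ ⟨j, rfl⟩
  exact twist_pplusAt_mem_twistedIdeal ((hdiag i).mul (hdiag l)) (not_isDegreeSign_mul hinj hil)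
    (le_oddDegree j)

variable [Finite α]

lemma twistedVero_mul_flipSign_eq_zero (h2 : (2 : k) ≠ 0)
    (hdec : Jideal n k = ⨅ i, twistedIdeal k (ε i)) {l : α} {f : R n k}
    (hf : f ∈ ⨅ (i) (_ : i ≠ l), twistedIdeal k (ε i)) {i : Fin n} {S : Finset (Sym2 (Fin n))}
    (hS : S ⊆ edgesAt i) (hempty : S ≠ ∅) (hfull : S ≠ edgesAt i) :
    twistedVero k (ε l * flipSign S) f = 0 := by
  have hJ : Jideal n k ≤ twistedIdeal k (ε l * flipSign S) :=
    (Jideal_le_twistedIdeal_iff h2).2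
      ((isDiagConst_of_Jideal_eq_iInf h2 hdec l).mul (isDiagConst_flipSign hS))
  obtain ⟨m, hm⟩ := exists_twistedIdeal_le (hdec ▸ hJ)
  have hml : m ≠ l := by
    rintro rfl
    have hflip := isDegreeSign_of_twistedIdeal_le h2 hm
    rw [← mul_assoc, sign_mul_self, one_mul] at hflip
    exact (hflip.eq_empty_or_eq_edgesAt hS).elim hempty hfull
  exact hm ((Ideal.mem_iInf.1 ((Ideal.mem_iInf.1 hf) m)) hml)

lemma iInf_ne_le_twistedIdeal_sup_pplusIdeal (h2 : (2 : k) ≠ 0) (hn : 2 ≤ n) (hodd : Odd n)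
    (hdec : Jideal n k = ⨅ i, twistedIdeal k (ε i)) (l : α) :
    ⨅ (i) (_ : i ≠ l), twistedIdeal k (ε i) ≤ twistedIdeal k (ε l) ⊔ pplusIdeal k (ε l) := by
  refine fun f hf => mem_ker_sup_of_forall_monomial_mem _ fun d hd => ?_
  rw [mem_support_iff] at hd
  obtain ⟨u, hu⟩ := exists_VN_eq_of_coeff_twistedVero_ne_zero hd
  have hsum : Even (∑ i, d i) := by
    rw [← hu, sum_VN]
    exact even_two_mul _
  exact exists_mem_pplusIdeal_twistedVero_eq_monomial h2 hn hodd _ hsum fun i =>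
    sub_two_le_of_coeff_twistedVero_ne_zero h2
      (fun S => twistedVero_mul_flipSign_eq_zero h2 hdec hf) hd

theorem iInf_ne_twistedIdeal_eq_sup (h2 : (2 : k) ≠ 0) (hn : 2 ≤ n) (hodd : Odd n)
    (hinj : Function.Injective fun i => twistedIdeal k (ε i))
    (hdec : Jideal n k = ⨅ i, twistedIdeal k (ε i)) (l : α) :
    ⨅ (i) (_ : i ≠ l), twistedIdeal k (ε i) = Jideal n k ⊔ pplusIdeal k (ε l) := by
  have hQ := pplusIdeal_le_iInf_ne h2 hinj hdec l
  have hA := iInf_ne_le_twistedIdeal_sup_pplusIdeal h2 hn hodd hdec l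
  rw [hdec, iInf_split_single (fun i => twistedIdeal k (ε i)) l, sup_comm,
    ← sup_inf_assoc_of_le _ hQ, sup_comm, inf_eq_right.2 hA]

end Intersection

/-- For odd `n ≥ 3` and `char k ≠ 2`: omitting one component of the
prime decomposition of `J_n` yields `J_n + ⟨φ_l(p⁺_{n,1}), …, φ_l(p⁺_{n,n})⟩`; each
`p⁺_{n,j}` is `V_n`-homogeneous of `V_n`-degree `(n-2,…,n-2)+e_j` and total degree
`(n-1)²/2`. -/
theorem subintersection_odd (n : ℕ) (hn : 3 ≤ n) (hodd : Odd n)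
    (k : Type*) [Field k] (hk : (2 : k) ≠ 0)
    (φ : Fin (2 ^ c (n - 1)) → (R n k ≃ₐ[k] R n k))
    (htw : ∀ i, IsTwisting n k (φ i))
    (hdist : Function.Injective fun i => Ideal.map (φ i).toAlgHom (Iideal n k))
    (hdec : Jideal n k = ⨅ i, Ideal.map (φ i).toAlgHom (Iideal n k)) :
    (∀ l, (⨅ (i) (_ : i ≠ l), Ideal.map (φ i).toAlgHom (Iideal n k)) =
        Jideal n k +
          Ideal.span (Set.range fun j : Fin n => (φ l) (pplusOdd n k j))) ∧
    ∀ j : Fin n,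
      VHomog n k (pplusOdd n k j) (fun i => (n - 2) + if i = j then 1 else 0) ∧
      (pplusOdd n k j).totalDegree = (n - 1) ^ 2 / 2 := by
  have hn2 : 2 ≤ n := by omega
  choose ε hε using fun i => (htw i).exists_eq_twist
  have hideal (i) := map_Iideal_eq_twistedIdeal (hε i)
  have hgen (l) (f : R n k) : φ l f = twist k (ε l) f := DFunLike.congr_fun (hε l) f
  simp only [hideal, hgen] at hdist hdec ⊢
  refine ⟨fun l => ?_, fun j => ⟨vHomog_pplusAt _, ?_⟩⟩
  · exact iInf_ne_twistedIdeal_eq_sup hk hn2 hodd hdist hdec l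
  · rw [← sum_oddDegree hn2 j]
    exact totalDegree_pplusAt (le_oddDegree j) (even_sum_oddDegree hn2 hodd j)

end Veronese
end
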